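/- Let T be a τ-theory, let M be a T-existentially closed τ-structure, and let N be a τ-structure such that N ≺_{Σ₁} M (N is a substructure of M and every existential formula with parameters from N true in M is true in N). Then N is T-existentially closed. -/

import Mathlib

namespace ModelCompanionship

open FirstOrder Language

universe u v

variable {L : FirstOrder.Language.{u, v}}

/-- A bundled `L`-structure with carrier in `Type (max u v)`. -/
structure BStruc (L : FirstOrder.Language.{u, v}) where
  /-- the underlying set of the structure -/
  carrier : Type (max u v)
  /-- the interpretation of the symbols of `L` -/
  struc : L.Structure carrier

attribute [instance] BStruc.struc

/-- Iterated existential quantification of the last `k` bound variables. -/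
def exsN {α : Type*} : ∀ {m k : ℕ}, L.BoundedFormula α (m + k) → L.BoundedFormula α m
  | _, 0, φ => φ
  | _, _ + 1, φ => exsN φ.ex

/-- `ψ` is a universal (`Π₁`) sentence: `∀ x⃗, φ` with `φ` quantifier-free. -/
def IsUniversalSentence (ψ : L.Sentence) : Prop :=
  ∃ (n : ℕ) (φ : L.BoundedFormula Empty n), φ.IsQF ∧ ψ = φ.alls

/-- `ψ` is a `Π₂` sentence: `∀ x⃗, ∃ y⃗, φ` with `φ` quantifier-free. -/
def IsPi2Sentence (ψ : L.Sentence) : Prop :=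
  ∃ (m k : ℕ) (φ : L.BoundedFormula Empty (m + k)), φ.IsQF ∧ ψ = (exsN φ).alls

/-- `ψ` holds in every model of `T`. -/
def SemConseq (T : L.Theory) (ψ : L.Sentence) : Prop :=
  ∀ M : BStruc L, M.carrier ⊨ T → M.carrier ⊨ ψ

/-- `T` is consistent: it has a model. -/
def Consistent (T : L.Theory) : Prop :=
  ∃ M : BStruc L, M.carrier ⊨ T

/-- `T` is complete: it is consistent and decides every sentence. -/
def IsCompleteTheory (T : L.Theory) : Prop :=
  Consistent T ∧ ∀ ψ : L.Sentence, SemConseq T ψ ∨ SemConseq T ψ.not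

/-- `T_∀`: the set of universal sentences true in every model of `T`. -/
def univFrag (T : L.Theory) : L.Theory :=
  {ψ | IsUniversalSentence ψ ∧ SemConseq T ψ}

/-- Two formulas in the same free variables are `T`-equivalent. -/
def TEquiv (T : L.Theory) {n : ℕ} (φ ψ : L.Formula (Fin n)) : Prop :=
  ∀ M : BStruc L, M.carrier ⊨ T → ∀ v : Fin n → M.carrier, φ.Realize v ↔ ψ.Realize v

section Maps

variable {M : Type (max u v)} {N : Type (max u v)} [L.Structure M] [L.Structure N]

/-- `f` preserves and reflects all first-order formulas (with parameters). -/
def ElementaryOn (f : M → N) : Prop :=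
  ∀ (n : ℕ) (φ : L.Formula (Fin n)) (v : Fin n → M),
    φ.Realize v ↔ φ.Realize fun i => f (v i)

/-- The embedding `e` is `Σ₁`-elementary: every existential formula with parameters
from the domain which holds in the codomain holds in the domain. -/
def Sigma1Elementary (e : M ↪[L] N) : Prop :=
  ∀ (n k : ℕ) (φ : L.BoundedFormula (Fin n) k), φ.IsQF → ∀ v : Fin n → M,
    (φ.exs.Realize fun i => e (v i)) → φ.exs.Realize v

end Maps

/-- `M` is a `T`-existentially closed structure. -/
def IsEC (T : L.Theory) (M : Type (max u v)) [L.Structure M] : Prop :=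
  (∃ (N : BStruc L) (_ : M ↪[L] N.carrier), N.carrier ⊨ T) ∧
    ∀ (N : BStruc L) (e : M ↪[L] N.carrier), N.carrier ⊨ T → Sigma1Elementary e

/-- `T` is model complete: substructure inclusions between models of `T` are elementary. -/
def IsModelComplete (T : L.Theory) : Prop :=
  ∀ (M N : BStruc L) (e : M.carrier ↪[L] N.carrier),
    M.carrier ⊨ T → N.carrier ⊨ T → ElementaryOn (L := L) fun a => e a

/-- `T*` is a model companion of `T`. -/
def IsModelCompanion (T Tstar : L.Theory) : Prop :=
  (∀ M : BStruc L, M.carrier ⊨ T →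
      ∃ (N : BStruc L) (_ : M.carrier ↪[L] N.carrier), N.carrier ⊨ Tstar) ∧
    (∀ M : BStruc L, M.carrier ⊨ Tstar →
      ∃ (N : BStruc L) (_ : M.carrier ↪[L] N.carrier), N.carrier ⊨ T) ∧
    IsModelComplete Tstar

/-!
If `N ≺_{Σ₁} M`, any finite part of the quantifier-free diagram of `M` is realized in `N` by a map
`M → N` fixing `N` pointwise: its parameters outside `N` can be quantified away existentially. For
an extension `P ⊨ T` of `N`, an ultraproduct of these maps embeds `M` over `N` into an elementary
extension `Q` of `P`. An existential formula over `N` true in `P` is then true in `Q ⊨ T`, hence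
in `M` because `M` is `T`-ec, hence in `N`.
-/

section QuantifierFree

variable {α : Type*} {M N : Type*} [L.Structure M] [L.Structure N]

theorem isQF_iInf {β : Type*} [Finite β] {φ : β → L.Formula α}
    (hφ : ∀ b, BoundedFormula.IsQF (φ b)) : BoundedFormula.IsQF (Formula.iInf φ) := by
  have isQF_foldr (l : List β) :
      BoundedFormula.IsQF ((l.map φ).foldr (· ⊓ ·) (⊤ : L.BoundedFormula α 0)) := by
    induction l with
    | nil => exact .top
    | cons b l ih => exact (hφ b).inf ih
  exact isQF_foldr _

theorem isQF_restrictFreeVar [DecidableEq α] {β : Type*} {n : ℕ} {φ : L.BoundedFormula α n}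
    (hφ : φ.IsQF) (f : φ.freeVarFinset → β) : (φ.restrictFreeVar f).IsQF := by
  induction hφ with
  | falsum => exact .falsum
  | of_isAtomic hatomic =>
    cases hatomic with
    | equal t₁ t₂ => exact (BoundedFormula.IsAtomic.equal _ _).isQF
    | rel R ts => exact (BoundedFormula.IsAtomic.rel R _).isQF
  | imp _ _ ih₁ ih₂ => exact (ih₁ _).imp (ih₂ _)

theorem realize_relabel_formula {β : Type*} {k : ℕ} {φ : L.Formula α} {g : α → β ⊕ Fin k}
    {v : β → M} {xs : Fin k → M} :
    BoundedFormula.Realize (l := k) (BoundedFormula.relabel (k := 0) g φ) v xs ↔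
      φ.Realize (Sum.elim v xs ∘ g) :=
  BoundedFormula.realize_relabel.trans (iff_of_eq (congrArg _ (Subsingleton.elim _ _)))

theorem realize_embedding_comp_iff {φ : L.Formula α} (hφ : BoundedFormula.IsQF φ) (f : M ↪[L] N)
    {v : α → M} : φ.Realize (f ∘ v) ↔ φ.Realize v := by
  rw [Formula.Realize, Formula.Realize, ← hφ.realize_embedding f,
    Subsingleton.elim (f ∘ default) default]

theorem realize_exs_embedding_comp {k : ℕ} {φ : L.BoundedFormula α k} (hφ : φ.IsQF) (f : M ↪[L] N)
    {v : α → M} (h : φ.exs.Realize v) : φ.exs.Realize (f ∘ v) := by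
  rw [BoundedFormula.realize_exs] at h ⊢
  obtain ⟨y, hy⟩ := h
  exact ⟨f ∘ y, (hφ.realize_embedding f).2 hy⟩

end QuantifierFree

section Diagram

/-- The quantifier-free diagram of `M`: the quantifier-free formulas true in `M`. Elements of `M`
serve as variables, each standing for itself, instead of as new constant symbols. -/
def qfDiagram (L : FirstOrder.Language.{u, v}) (M : Type*) [L.Structure M] : Set (L.Formula M) :=
  {φ | BoundedFormula.IsQF φ ∧ φ.Realize id}

variable {M Q : Type*} [L.Structure M] [L.Structure Q]

theorem realize_iff_of_realize_qfDiagram {h : M → Q} (hh : ∀ φ ∈ qfDiagram L M, φ.Realize h)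
    {φ : L.Formula M} (hφ : BoundedFormula.IsQF φ) : φ.Realize h ↔ φ.Realize id := by
  refine ⟨fun hQ => ?_, fun hM => hh φ ⟨hφ, hM⟩⟩
  by_contra hM
  exact hh φ.not ⟨hφ.not, hM⟩ hQ

theorem exists_embedding_of_realize_qfDiagram {h : M → Q}
    (hh : ∀ φ ∈ qfDiagram L M, φ.Realize h) : ∃ g : M ↪[L] Q, ⇑g = h := by
  have equal_iff (s t : L.Term M) : s.realize h = t.realize h ↔ s.realize id = t.realize id := by
    simpa only [Formula.realize_equal] using
      realize_iff_of_realize_qfDiagram hh (φ := s.equal t) (BoundedFormula.IsAtomic.equal _ _).isQF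
  have rel_iff {n : ℕ} (R : L.Relations n) (x : Fin n → M) :
      Structure.RelMap R (h ∘ x) ↔ Structure.RelMap R x := by
    simpa only [Formula.realize_rel] using!
      realize_iff_of_realize_qfDiagram hh (φ := R.formula fun k => Term.var (x k))
        (BoundedFormula.IsAtomic.rel _ _).isQF
  refine ⟨⟨⟨h, fun a b hab => ?_⟩, fun f x => ?_, rel_iff⟩, rfl⟩
  · exact (equal_iff (Term.var a) (Term.var b)).1 hab
  · exact (equal_iff (Term.var (Structure.funMap f x)) (Term.func f (Term.var ∘ x))).2 rfl

end Diagram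

section Ultrapower

open Filter

/-- The diagonal embedding of a structure into its ultrapower by `U`. -/
def diagonalEmbedding (L : FirstOrder.Language.{u, v}) (P : Type*) [L.Structure P] [Nonempty P]
    {ι : Type*} (U : Ultrafilter ι) : P ↪ₑ[L] (U : Filter ι).Product fun _ => P where
  toFun x := ((fun _ => x : ι → P) : (U : Filter ι).Product fun _ => P)
  map_formula' _ φ x :=
    (Ultraproduct.realize_formula_cast φ fun j _ => x j).trans eventually_const

universe w

theorem exists_elementaryEmbedding_realize {α : Type w} {β : Type*} {P : Type max u v w}
    [L.Structure P] (p : Set (L.Formula α)) (i : β → α) (b : β → P)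
    (hp : ∀ S : Finset p, ∃ a : α → P, a ∘ i = b ∧ ∀ φ ∈ S, φ.1.Realize a) :
    ∃ (Q : Type max u v w) (_ : L.Structure Q) (g : P ↪ₑ[L] Q) (a : α → Q),
      a ∘ i = g ∘ b ∧ ∀ φ ∈ p, φ.Realize a := by
  rcases isEmpty_or_nonempty P with hP | hP
  · -- Łoś's theorem needs `P` nonempty; if `P` is empty, there is only one assignment `α → P`.
    obtain ⟨a, ha, -⟩ := hp ∅
    refine ⟨P, inferInstance, .refl L P, a, ha, fun φ hφ => ?_⟩
    obtain ⟨a', -, ha'⟩ := hp {⟨φ, hφ⟩}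
    rw [Subsingleton.elim a a']
    exact ha' _ (Finset.mem_singleton_self _)
  · choose a ha hreal using hp
    let U : Ultrafilter (Finset p) := .of atTop
    refine ⟨(U : Filter (Finset p)).Product fun _ => P, inferInstance, diagonalEmbedding L P U,
      fun x => ((fun S => a S x : Finset p → P) : (U : Filter (Finset p)).Product fun _ => P),
      funext fun y => congrArg _ (funext fun S => congrFun (ha S) y), fun φ hφ => ?_⟩
    have mem_eventually : ∀ᶠ S in (U : Filter (Finset p)), ⟨φ, hφ⟩ ∈ S :=
      Ultrafilter.of_le atTop ((eventually_ge_atTop {⟨φ, hφ⟩}).mono fun _ =>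
        Finset.singleton_subset_iff.1)
    exact (Ultraproduct.realize_formula_cast φ fun x S => a S x).2
      (mem_eventually.mono fun S hS => hreal S _ hS)

end Ultrapower

namespace Sigma1Elementary

variable {M N P : Type max u v} [L.Structure M] [L.Structure N] [L.Structure P]

theorem comp {g : M ↪[L] P} {e : N ↪[L] M} (hg : Sigma1Elementary g) (he : Sigma1Elementary e) :
    Sigma1Elementary (g.comp e) :=
  fun n k φ hφ v hv => he n k φ hφ v (hg n k φ hφ (e ∘ v) hv)

theorem of_comp {g : M ↪[L] P} {e : N ↪[L] M} (h : Sigma1Elementary (g.comp e)) :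
    Sigma1Elementary e :=
  fun n k φ hφ v hv => h n k φ hφ v (realize_exs_embedding_comp hφ g hv)

variable {e : N ↪[L] M}

theorem nonempty (he : Sigma1Elementary e) [Nonempty M] : Nonempty N := by
  have hM : (⊤ : L.BoundedFormula (Fin 0) 1).exs.Realize fun i => e (Fin.elim0 i) :=
    BoundedFormula.realize_exs.2 ⟨fun _ => Classical.arbitrary M, BoundedFormula.realize_top.2 ⟨⟩⟩
  obtain ⟨y, -⟩ := BoundedFormula.realize_exs.1 (he 0 1 ⊤ .top Fin.elim0 hM)
  exact ⟨y 0⟩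

theorem exists_realize_of_finite (he : Sigma1Elementary e) {α β : Type*} [Finite α] [Finite β]
    {φ : L.Formula (α ⊕ β)} (hφ : BoundedFormula.IsQF φ) {v : α → N} {y : β → M}
    (h : φ.Realize (Sum.elim (e ∘ v) y)) : ∃ z : β → N, φ.Realize (Sum.elim v z) := by
  let a := Finite.equivFin α
  let b := Finite.equivFin β
  let ψ : L.BoundedFormula (Fin (Nat.card α)) (Nat.card β) :=
    BoundedFormula.relabel (k := 0) (Sum.map a b) φ
  have realize_ψ {A : Type max u v} [L.Structure A] (s : Fin (Nat.card α) → A)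
      (t : Fin (Nat.card β) → A) : ψ.Realize s t ↔ φ.Realize (Sum.elim (s ∘ a) (t ∘ b)) := by
    rw [realize_relabel_formula, Sum.elim_comp_map]
  have hM : ψ.exs.Realize fun j => e ((v ∘ a.symm) j) :=
    BoundedFormula.realize_exs.2 ⟨y ∘ b.symm, (realize_ψ _ _).2 <| by
      simpa [Function.comp_def] using h⟩
  obtain ⟨z, hz⟩ := BoundedFormula.realize_exs.1 (he _ _ ψ (hφ.relabel _) (v ∘ a.symm) hM)
  exact ⟨z ∘ b, by simpa [Function.comp_assoc] using (realize_ψ _ z).1 hz⟩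

theorem exists_realize (he : Sigma1Elementary e) {α β : Type*} {φ : L.Formula (α ⊕ β)}
    (hφ : BoundedFormula.IsQF φ) {v : α → N} {y : β → M}
    (h : φ.Realize (Sum.elim (e ∘ v) y)) : ∃ z : β → N, φ.Realize (Sum.elim v z) := by
  classical
  let A := φ.freeVarFinset.toLeft
  let B := φ.freeVarFinset.toRight
  let split : φ.freeVarFinset → A ⊕ B
    | ⟨.inl a, ha⟩ => .inl ⟨a, Finset.mem_toLeft.2 ha⟩
    | ⟨.inr b, hb⟩ => .inr ⟨b, Finset.mem_toRight.2 hb⟩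
  have realize_split {K : Type max u v} [L.Structure K] (s : α → K) (t : β → K) :
      Formula.Realize (φ.restrictFreeVar split) (Sum.elim (s ∘ (↑)) (t ∘ (↑))) ↔
        φ.Realize (Sum.elim s t) :=
    BoundedFormula.realize_restrictFreeVar _ <| by rintro ⟨_ | _, _⟩ <;> rfl
  obtain ⟨z, hz⟩ := he.exists_realize_of_finite (isQF_restrictFreeVar hφ split)
    (v := v ∘ (↑)) (y := y ∘ (↑)) ((realize_split (e ∘ v) y).2 h)
  have nonempty_of_var (b : β) : Nonempty N :=
    have : Nonempty M := ⟨y b⟩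
    he.nonempty
  obtain ⟨z', rfl⟩ := Subtype.val_injective.surjective_comp_right'
    (fun b => (nonempty_of_var b).some) z
  exact ⟨z', (realize_split v z').1 hz⟩

theorem exists_leftInverse_realize (he : Sigma1Elementary e) {φ : L.Formula M}
    (hφ : φ ∈ qfDiagram L M) : ∃ r : M → N, Function.LeftInverse r e ∧ φ.Realize r := by
  -- Elements of `N` become parameters, and the other elements of `M` variables to be quantified.
  let var : M → N ⊕ M := Function.extend e Sum.inl Sum.inr
  have var_apply (x : N) : var (e x) = .inl x := e.injective.extend_apply _ _ x
  have elim_var : Sum.elim e id ∘ var = id := by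
    funext m
    by_cases hm : ∃ x, e x = m
    · obtain ⟨x, rfl⟩ := hm
      simp only [Function.comp_apply, var_apply, Sum.elim_inl, id]
    · simp only [var, Function.comp_apply, Function.extend_apply' _ _ _ hm, Sum.elim_inr]
  obtain ⟨z, hz⟩ := he.exists_realize (φ := φ.relabel var) (hφ.1.relabel _) (v := id) (y := id) <|
    Formula.realize_relabel.2 <| by rw [Function.comp_id, elim_var]; exact hφ.2
  exact ⟨Sum.elim id z ∘ var, fun x => by rw [Function.comp_apply, var_apply]; rfl,
    Formula.realize_relabel.1 hz⟩

theorem exists_amalgam (he : Sigma1Elementary e) (f : N ↪[L] P) :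
    ∃ (Q : BStruc L) (g : P ↪ₑ[L] Q.carrier) (h : M ↪[L] Q.carrier),
      h.comp e = g.toEmbedding.comp f := by
  have finite_part (S : Finset (qfDiagram L M)) :
      ∃ a : M → P, a ∘ e = f ∧ ∀ φ ∈ S, φ.1.Realize a := by
    let ψ : L.Formula M := Formula.iInf fun φ : S => φ.1.1
    have hψ : ψ ∈ qfDiagram L M :=
      ⟨isQF_iInf fun φ => φ.1.2.1, Formula.realize_iInf.2 fun φ => φ.1.2.2⟩
    obtain ⟨r, hr, hrψ⟩ := he.exists_leftInverse_realize hψ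
    refine ⟨f ∘ r, by rw [Function.comp_assoc, hr.comp_eq_id, Function.comp_id], fun φ hφ => ?_⟩
    exact (realize_embedding_comp_iff φ.2.1 f).2 (Formula.realize_iInf.1 hrψ ⟨φ, hφ⟩)
  obtain ⟨Q, _, g, a, hae, ha⟩ :=
    exists_elementaryEmbedding_realize (qfDiagram L M) e f finite_part
  obtain ⟨h, rfl⟩ := exists_embedding_of_realize_qfDiagram ha
  exact ⟨⟨Q, inferInstance⟩, g, h, Embedding.ext (congrFun hae)⟩

end Sigma1Elementary

/-- a `Σ₁`-elementary substructure of a `T`-ec structure is `T`-ec. -/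
theorem isEC_of_sigma1_substructure (T : L.Theory)
    (M N : Type (max u v)) [L.Structure M] [L.Structure N]
    (hM : IsEC T M) (e : N ↪[L] M) (he : Sigma1Elementary e) :
    IsEC T N := by
  obtain ⟨⟨R, j, hR⟩, hM⟩ := hM
  refine ⟨⟨R, j.comp e, hR⟩, fun P f hP => ?_⟩
  obtain ⟨Q, g, h, hcomm⟩ := he.exists_amalgam f
  have hQ : Q.carrier ⊨ T := (g.theory_model_iff T).1 hP
  have hgf : Sigma1Elementary (g.toEmbedding.comp f) := hcomm ▸ (hM Q h hQ).comp he
  exact hgf.of_comp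

end ModelCompanionship
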